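/- Let D ≥ 3 be odd, m ≥ 1, and d ≥ 1. For a partition ρ = (ρ_1 ≥ … ≥ ρ_m ≥ 0) of d with at most m parts, set e_ρ := Σ_{i=1}^{m} 2·⌈ρ_i/(2(D−2))⌉. Then the maximum of e_ρ over all partitions ρ of d with at most m parts equals 2d if d ≤ m, and equals 2m + 2·⌊(d−m)/(2(D−2))⌋ if d ≥ m. -/

import Mathlib

open scoped BigOperators

/-!
Write `⌈a / K⌉` for the rounded-up quotient of a part `a` by `K = 2 (D - 2)`. Being an integer, it
satisfies `⌈a / K⌉ ≤ a` and `K ⌈a / K⌉ ≤ a + (K - 1)`. Summed over the `m` parts of a partition of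
`d`, the first bound gives `d` and the second gives `m + ⌊(d - m) / K⌋`. The first is attained by
the column `(1, …, 1, 0, …, 0)`, the second by the hook `(d - m + 1, 1, …, 1)`.
-/

section CeilDiv

variable {K : ℕ}

theorem ceil_natCast_div_natCast {𝕜 : Type*} [Semifield 𝕜] [LinearOrder 𝕜]
    [IsStrictOrderedRing 𝕜] [FloorSemiring 𝕜] (hK : 0 < K) (a : ℕ) :
    ⌈(a : 𝕜) / K⌉₊ = a ⌈/⌉ K := by
  refine eq_of_forall_ge_iff fun n ↦ ?_
  rw [Nat.ceil_le, div_le_iff₀' (Nat.cast_pos.2 hK), ceilDiv_le_iff_le_mul hK]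
  exact_mod_cast Iff.rfl

theorem ceilDiv_le_self (hK : 0 < K) (a : ℕ) : a ⌈/⌉ K ≤ a :=
  (ceilDiv_le_iff_le_mul hK).2 (Nat.le_mul_of_pos_left a hK)

theorem add_one_ceilDiv (hK : 0 < K) (a : ℕ) : (a + 1) ⌈/⌉ K = a / K + 1 := by
  rw [Nat.ceilDiv_eq_add_pred_div, Nat.add_right_comm, Nat.add_sub_cancel,
    Nat.add_div_right a hK]

theorem mul_ceilDiv_lt_add (hK : 0 < K) (a : ℕ) : K * (a ⌈/⌉ K) < a + K := by
  have h : K * (a ⌈/⌉ K) ≤ a + K - 1 := Nat.mul_div_le _ K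
  omega

theorem sum_ceilDiv_le_card_add_div {ι : Type*} {s : Finset ι} {f : ι → ℕ} (hK : 0 < K)
    (hs : s.card ≤ ∑ i ∈ s, f i) :
    ∑ i ∈ s, f i ⌈/⌉ K ≤ s.card + (∑ i ∈ s, f i - s.card) / K := by
  have mul_sum_add_card_le :
      K * ∑ i ∈ s, f i ⌈/⌉ K + s.card ≤ ∑ i ∈ s, f i + K * s.card := by
    calc K * ∑ i ∈ s, f i ⌈/⌉ K + s.card = ∑ i ∈ s, (K * (f i ⌈/⌉ K) + 1) := by
          simp [Finset.sum_add_distrib, Finset.mul_sum]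
      _ ≤ ∑ i ∈ s, (f i + K) := Finset.sum_le_sum fun i _ ↦ mul_ceilDiv_lt_add hK (f i)
      _ = ∑ i ∈ s, f i + K * s.card := by simp [Finset.sum_add_distrib, mul_comm]
  rw [add_comm s.card, ← Nat.add_mul_div_left _ _ hK, Nat.le_div_iff_mul_le hK, mul_comm]
  omega

end CeilDiv

/-- The partitions of `d` with at most `m` parts, padded with zeros to nonincreasing sequences of
length exactly `m`. -/
def boundedPartitions (m d : ℕ) : Set (Fin m → ℕ) :=
  {ρ | Antitone ρ ∧ ∑ i, ρ i = d}

/-- The column partition `(1, …, 1, 0, …, 0)` with `d` ones; its size is `d` only if `d ≤ m`. -/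
def columnPartition (m d : ℕ) : Fin m → ℕ :=
  fun i ↦ if (i : ℕ) < d then 1 else 0

/-- The hook partition `(a + 1, 1, …, 1)` with `m` parts. -/
def hookPartition (m : ℕ) [NeZero m] (a : ℕ) : Fin m → ℕ :=
  fun i ↦ Pi.single (M := fun _ ↦ ℕ) 0 a i + 1

section Partitions

variable {K m d : ℕ}

theorem columnPartition_mem_boundedPartitions (hdm : d ≤ m) :
    columnPartition m d ∈ boundedPartitions m d := by
  refine ⟨fun i j hij ↦ ?_, ?_⟩
  · grind [columnPartition]
  · simp [columnPartition, Fin.card_filter_val_lt, hdm]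

theorem columnPartition_ceilDiv (hK : 0 < K) (i : Fin m) :
    columnPartition m d i ⌈/⌉ K = columnPartition m d i := by
  have one_ceilDiv : 1 ⌈/⌉ K = 1 := by simpa using add_one_ceilDiv hK 0
  unfold columnPartition
  split_ifs <;> simp [one_ceilDiv]

theorem hookPartition_mem_boundedPartitions [NeZero m] (a : ℕ) :
    hookPartition m a ∈ boundedPartitions m (a + m) := by
  refine ⟨fun i j hij ↦ ?_, by simp [hookPartition, Finset.sum_add_distrib]⟩
  rcases eq_or_ne j 0 with rfl | hj
  · rw [nonpos_iff_eq_zero.1 hij]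
  · simp [hookPartition, hj]

theorem hookPartition_ceilDiv [NeZero m] (hK : 0 < K) (a : ℕ) (i : Fin m) :
    hookPartition m a i ⌈/⌉ K = hookPartition m (a / K) i := by
  rcases eq_or_ne i 0 with rfl | hi <;> simp [hookPartition, add_one_ceilDiv hK, *]

theorem isGreatest_sum_ceilDiv_of_le (hK : 0 < K) (hdm : d ≤ m) :
    IsGreatest ((fun ρ ↦ ∑ i, ρ i ⌈/⌉ K) '' boundedPartitions m d) d := by
  constructor
  · have hcol := columnPartition_mem_boundedPartitions hdm
    exact ⟨_, hcol, by simpa only [columnPartition_ceilDiv hK] using hcol.2⟩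
  · rintro _ ⟨ρ, ⟨-, rfl⟩, rfl⟩
    exact Finset.sum_le_sum fun i _ ↦ ceilDiv_le_self hK (ρ i)

theorem isGreatest_sum_ceilDiv_of_ge (hK : 0 < K) (hm : 0 < m) (hmd : m ≤ d) :
    IsGreatest ((fun ρ ↦ ∑ i, ρ i ⌈/⌉ K) '' boundedPartitions m d) (m + (d - m) / K) := by
  have : NeZero m := ⟨hm.ne'⟩
  constructor
  · refine ⟨hookPartition m (d - m), ?_, ?_⟩
    · simpa only [Nat.sub_add_cancel hmd] using
        hookPartition_mem_boundedPartitions (m := m) (d - m)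
    · simpa only [hookPartition_ceilDiv hK, add_comm m] using
        (hookPartition_mem_boundedPartitions (m := m) ((d - m) / K)).2
  · rintro _ ⟨ρ, ⟨-, rfl⟩, rfl⟩
    simpa using sum_ceilDiv_le_card_add_div (s := Finset.univ) (f := ρ) hK (by simpa using hmd)

theorem setOf_sum_mul_ceil_eq_image (hK : 0 < K) (c : ℕ) :
    {e : ℕ | ∃ ρ : Fin m → ℕ, (∀ i j : Fin m, i ≤ j → ρ j ≤ ρ i) ∧ (∑ i, ρ i = d) ∧
        e = ∑ i, c * ⌈(ρ i : ℚ) / K⌉₊} =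
      (c * ·) '' ((fun ρ ↦ ∑ i, ρ i ⌈/⌉ K) '' boundedPartitions m d) := by
  ext e
  simp only [Set.image_image, Set.mem_image, Set.mem_ofPred_eq, boundedPartitions, Antitone,
    ceil_natCast_div_natCast hK, ← Finset.mul_sum, and_assoc, eq_comm (a := e)]

end Partitions

theorem max_erho_odd_general {K m : ℕ} (hK : 0 < K) (hm : 1 ≤ m) (c d : ℕ) :
    (d ≤ m → IsGreatest
      {e : ℕ | ∃ ρ : Fin m → ℕ, (∀ i j : Fin m, i ≤ j → ρ j ≤ ρ i) ∧ (∑ i, ρ i = d) ∧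
        e = ∑ i, c * ⌈(ρ i : ℚ) / K⌉₊} (c * d)) ∧
    (m ≤ d → IsGreatest
      {e : ℕ | ∃ ρ : Fin m → ℕ, (∀ i j : Fin m, i ≤ j → ρ j ≤ ρ i) ∧ (∑ i, ρ i = d) ∧
        e = ∑ i, c * ⌈(ρ i : ℚ) / K⌉₊} (c * m + c * ((d - m) / K))) := by
  have mul_mono : Monotone (c * ·) := fun _ _ h ↦ Nat.mul_le_mul_left c h
  rw [setOf_sum_mul_ceil_eq_image hK, ← mul_add]
  exact ⟨fun hdm ↦ mul_mono.map_isGreatest (isGreatest_sum_ceilDiv_of_le hK hdm),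
    fun hmd ↦ mul_mono.map_isGreatest (isGreatest_sum_ceilDiv_of_ge hK hm hmd)⟩

/-- Let `D ≥ 3` be odd, `m ≥ 1`, `d ≥ 1`.  For a partition `ρ` of `d` with at most `m`
parts set `e_ρ := Σ_i 2⌈ρ_i/(2(D−2))⌉`.  The maximum of `e_ρ` over all such partitions
is `2d` if `d ≤ m`, and `2m + 2⌊(d−m)/(2(D−2))⌋` if `d ≥ m`. -/
theorem max_erho_odd (D m d : ℕ) (hD : 3 ≤ D) (hDodd : Odd D) (hm : 1 ≤ m)
    (hd : 1 ≤ d) :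
    (d ≤ m → IsGreatest
      {e : ℕ | ∃ ρ : Fin m → ℕ, (∀ i j : Fin m, i ≤ j → ρ j ≤ ρ i) ∧ (∑ i, ρ i = d) ∧
        e = ∑ i, 2 * ⌈(ρ i : ℚ) / (2 * ((D : ℚ) - 2))⌉₊} (2 * d)) ∧
    (m ≤ d → IsGreatest
      {e : ℕ | ∃ ρ : Fin m → ℕ, (∀ i j : Fin m, i ≤ j → ρ j ≤ ρ i) ∧ (∑ i, ρ i = d) ∧
        e = ∑ i, 2 * ⌈(ρ i : ℚ) / (2 * ((D : ℚ) - 2))⌉₊}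
      (2 * m + 2 * ((d - m) / (2 * (D - 2))))) := by
  have hK : ((2 * (D - 2) : ℕ) : ℚ) = 2 * ((D : ℚ) - 2) := by simp [show 2 ≤ D by omega]
  simpa only [hK] using max_erho_odd_general (K := 2 * (D - 2)) (by omega) hm 2 d
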